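/- Let (V, f) be a finite-dimensional nondegenerate symmetric bilinear space over a field K with char K ≠ 2, and let φ ∈ O(V) be cyclic (V is a cyclic K[x]-module, x acting as φ) with minimal polynomial (x − 1)^{2m+1}. Suppose φ = στ with σ, τ involutions in O(V). Then: (1) dim Bahn(σ) = dim Bahn(τ) ∈ {m, m+1}; (2) either Bahn(σ) and Bahn(τ) are both hyperbolic subspaces, or Fix(σ) and Fix(τ) are both hyperbolic subspaces; (3) disc Bahn(σ) = disc Bahn(τ), and this common class in K*/(K*)² lies in {(−1)^t, (−1)^t · disc V}, where t = ⌊(m+1)/2⌋. -/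

import Mathlib

open Polynomial Module

namespace Biref

variable {K V : Type*} [Field K] [AddCommGroup V] [Module K V]

/-- The orthogonal group of a bilinear form: all linear automorphisms preserving `f`. -/
def orthGroup (f : LinearMap.BilinForm K V) : Subgroup (V ≃ₗ[K] V) where
  carrier := {φ | ∀ x y : V, f (φ x) (φ y) = f x y}
  one_mem' := fun _ _ => rfl
  mul_mem' := by
    intro a b ha hb x y
    simpa using (ha (b x) (b y)).trans (hb x y)
  inv_mem' := by
    intro a ha x y
    show f (a.symm x) (a.symm y) = f x y
    conv_rhs => rw [← a.apply_symm_apply x, ← a.apply_symm_apply y]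
    exact (ha _ _).symm

/-- The special orthogonal group: isometries of determinant 1. -/
def specialOrthGroup (f : LinearMap.BilinForm K V) : Subgroup (V ≃ₗ[K] V) where
  carrier := {φ | (∀ x y : V, f (φ x) (φ y) = f x y) ∧
      LinearMap.det (φ : V →ₗ[K] V) = 1}
  one_mem' := ⟨fun _ _ => rfl, by simp⟩
  mul_mem' := by
    rintro a b ⟨ha, ha'⟩ ⟨hb, hb'⟩
    refine ⟨fun x y => by simpa using (ha (b x) (b y)).trans (hb x y), ?_⟩
    rw [LinearEquiv.coe_toLinearMap_mul, map_mul, ha', hb', one_mul]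
  inv_mem' := by
    rintro a ⟨ha, ha'⟩
    refine ⟨fun x y => ?_, ?_⟩
    · show f (a.symm x) (a.symm y) = f x y
      conv_rhs => rw [← a.apply_symm_apply x, ← a.apply_symm_apply y]
      exact (ha _ _).symm
    · have h1 : LinearMap.det ((a⁻¹ * a : V ≃ₗ[K] V) : V →ₗ[K] V) = 1 := by
        rw [inv_mul_cancel, LinearEquiv.coe_toLinearMap_one, LinearMap.det_id]
      rw [LinearEquiv.coe_toLinearMap_mul, map_mul, ha', mul_one] at h1
      exact h1

/-- The commutator subgroup `Ω(V)` of the orthogonal group. -/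
def omegaGroup (f : LinearMap.BilinForm K V) : Subgroup (V ≃ₗ[K] V) :=
  ⁅orthGroup f, orthGroup f⁆

/-- `g` is a product of two involutions lying in the subgroup `H`. -/
def IsBireflectionalIn {G : Type*} [Group G] (H : Subgroup G) (g : G) : Prop :=
  ∃ σ τ : G, σ ∈ H ∧ τ ∈ H ∧ σ ^ 2 = 1 ∧ τ ^ 2 = 1 ∧ g = σ * τ

/-- `g` is bireflectional in the group `G`. -/
def IsBireflectional {G : Type*} [Group G] (g : G) : Prop :=
  ∃ σ τ : G, σ ^ 2 = 1 ∧ τ ^ 2 = 1 ∧ g = σ * τ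

/-- `g` is reversed by some element of `H`. -/
def IsReversibleIn {G : Type*} [Group G] (H : Subgroup G) (g : G) : Prop :=
  ∃ α : G, α ∈ H ∧ α * g * α⁻¹ = g⁻¹

/-- A subspace is invariant under an endomorphism. -/
def Invt (ψ : V →ₗ[K] V) (U : Submodule K V) : Prop :=
  ∀ x ∈ U, ψ x ∈ U

/-- The discriminant of a (finite-dimensional, nondegenerate) bilinear space is the class
of `d` in `K*/(K*)²`: some Gram determinant equals `d` times a nonzero square. -/
def HasDisc (f : LinearMap.BilinForm K V) (d : K) : Prop :=
  ∃ (b : Basis (Fin (Module.finrank K V)) K V) (c : Kˣ),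
    (Matrix.of fun i j => f (b i) (b j)).det = d * (c : K) ^ 2

/-- A nondegenerate symmetric bilinear space is hyperbolic iff its Witt index is half its
dimension, i.e. there is a totally isotropic subspace of half the dimension. -/
def IsHyperbolicSpace (f : LinearMap.BilinForm K V) : Prop :=
  ∃ W : Submodule K V, (∀ x ∈ W, ∀ y ∈ W, f x y = 0) ∧
    2 * Module.finrank K W = Module.finrank K V

/-- The multiplicity of `p ^ d` as an elementary divisor of `φ`. -/
noncomputable def edMult (φ : Module.End K V) (p : K[X]) (d : ℕ) : ℕ :=
  (2 * Module.finrank K (LinearMap.ker (Polynomial.aeval φ p ^ d))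
    - Module.finrank K (LinearMap.ker (Polynomial.aeval φ p ^ (d + 1)))
    - Module.finrank K (LinearMap.ker (Polynomial.aeval φ p ^ (d - 1)))) / p.natDegree

/-- `n_j(φ)`: the number of elementary divisors `(x ± 1) ^ d` of `φ` with `d ≡ j mod 8`,
counted with multiplicity. -/
noncomputable def nPM [FiniteDimensional K V] (φ : Module.End K V) (j : ℕ) : ℕ :=
  ∑ d ∈ Finset.range (Module.finrank K V + 1),
    if d % 8 = j % 8 then edMult φ (X - 1) d + edMult φ (X + 1) d else 0

/-- The Fitting one space `Bahn^∞(ψ) = ⋂ⱼ im (ψ - 1)^j`. -/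
noncomputable def bahnInf (ψ : Module.End K V) : Submodule K V :=
  ⨅ j : ℕ, LinearMap.range ((ψ - 1) ^ j)

/-- The `K[x]`-submodule generated by `v` (`x` acting as `ψ`). -/
def cycSub (ψ : Module.End K V) (v : V) : Submodule K V :=
  Submodule.span K (Set.range fun n : ℕ => (ψ ^ n) v)

/-- `V` is a cyclic `K[x]`-module, `x` acting as `ψ`. -/
def IsCyclicEnd (ψ : Module.End K V) : Prop :=
  ∃ v : V, cycSub ψ v = ⊤

/-- `V` is a direct sum of two cyclic `K[x]`-submodules, `x` acting as `ψ`. -/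
def IsBicyclicEnd (ψ : Module.End K V) : Prop :=
  ∃ v w : V, cycSub ψ v ⊓ cycSub ψ w = ⊥ ∧ cycSub ψ v ⊔ cycSub ψ w = ⊤

/-- `V` is an indecomposable `K[x]`-module, `x` acting as `ψ`. -/
def ModIndec (ψ : Module.End K V) : Prop :=
  (⊥ : Submodule K V) ≠ ⊤ ∧
    ¬∃ A B : Submodule K V, Invt ψ A ∧ Invt ψ B ∧ A ≠ ⊥ ∧ B ≠ ⊥ ∧ A ⊓ B = ⊥ ∧ A ⊔ B = ⊤

/-- `ψ` is orthogonally indecomposable w.r.t. `f`: `V ≠ 0` and the only nondegenerate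
invariant subspaces are `0` and `V`. -/
def OrthIndec (f : LinearMap.BilinForm K V) (ψ : Module.End K V) : Prop :=
  (⊥ : Submodule K V) ≠ ⊤ ∧
    ∀ U : Submodule K V, Invt ψ U → (f.restrict U).Nondegenerate → U = ⊥ ∨ U = ⊤

/-- The Witt index: the dimension of a maximal totally isotropic subspace. -/
noncomputable def wittIndex (f : LinearMap.BilinForm K V) : ℕ :=
  sSup {n | ∃ W : Submodule K V, (∀ x ∈ W, ∀ y ∈ W, f x y = 0) ∧ Module.finrank K W = n}


section helpers

theorem det_anti (d : ℕ) : ∀ (M : Matrix (Fin d) (Fin d) K),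
    (∀ i j : Fin d, d ≤ (i : ℕ) + j → M i j = 0) →
    M.det = ∏ i : Fin d, ((-1) ^ (i : ℕ) * M i i.rev) := by
  induction d with
  | zero => intro M _; simp
  | succ n ih =>
    intro M hM
    rw [Matrix.det_succ_row M (Fin.last n), Finset.sum_eq_single 0]
    · rw [Fin.prod_univ_castSucc, mul_comm (∏ i : Fin n, _)]
      congr 1
      · simp
      · rw [ih]
        · refine Finset.prod_congr rfl fun i _ => ?_
          simp [Fin.rev_castSucc]
        · intro i j hij
          simp only [Matrix.submatrix_apply, Fin.succAbove_last, Fin.succAbove_zero]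
          apply hM
          simp; omega
    · intro j _ hj
      rw [hM]
      · simp
      · have : (j : ℕ) ≠ 0 := fun h => hj (Fin.ext h)
        simp; omega
    · simp

theorem gram_li {U : Type*} [AddCommGroup U] [Module K U] (g : LinearMap.BilinForm K U)
    {d : ℕ} (u : Fin d → U) (h : (Matrix.of fun i j => g (u i) (u j)).det ≠ 0) :
    LinearIndependent K u := by
  rw [Fintype.linearIndependent_iff]
  intro a ha
  have h0 : Matrix.vecMul a (Matrix.of fun i j => g (u i) (u j)) = 0 := by
    ext j
    have := congrArg (fun x => g x (u j)) ha
    simpa [Matrix.vecMul, dotProduct, LinearMap.BilinForm.sum_left] using this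
  have := Matrix.eq_zero_of_vecMul_eq_zero h h0
  exact fun i => congrFun this i

theorem hasDisc_smul {U : Type*} [AddCommGroup U] [Module K U] {g : LinearMap.BilinForm K U}
    {d : K} (h : HasDisc g d) (e s : K) (hs : s ≠ 0) (he : d = e * s ^ 2) : HasDisc g e := by
  obtain ⟨b, c, hb⟩ := h
  refine ⟨b, Units.mk0 s hs * c, ?_⟩
  rw [hb, he]; simp; ring

theorem hasDisc_unique {U : Type*} [AddCommGroup U] [Module K U] {g : LinearMap.BilinForm K U}
    {d e : K} (h : HasDisc g d) (h' : HasDisc g e) : ∃ s : K, s ≠ 0 ∧ d = e * s ^ 2 := by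
  obtain ⟨b, c, hb⟩ := h
  obtain ⟨b', c', hb'⟩ := h'
  have key := LinearMap.BilinForm.toMatrix_mul_basis_toMatrix b' b g
  have e1 : LinearMap.BilinForm.toMatrix b g = Matrix.of fun i j => g (b i) (b j) := by
    ext i j; simp [LinearMap.BilinForm.toMatrix_apply]
  have e2 : LinearMap.BilinForm.toMatrix b' g = Matrix.of fun i j => g (b' i) (b' j) := by
    ext i j; simp [LinearMap.BilinForm.toMatrix_apply]
  have k2 := congrArg Matrix.det key
  rw [Matrix.det_mul, Matrix.det_mul, Matrix.det_transpose, e1, e2, hb, hb'] at k2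
  have hP : (b'.toMatrix b).det ≠ 0 := by
    have := congrArg Matrix.det (b'.toMatrix_mul_toMatrix_flip b)
    rw [Matrix.det_mul, Matrix.det_one] at this
    intro h; simp [h] at this
  have hc := c.ne_zero
  have hc' := c'.ne_zero
  refine ⟨(b'.toMatrix b).det * c' / c, div_ne_zero (mul_ne_zero hP hc') hc, ?_⟩
  field_simp
  rw [← k2]; ring

theorem hasDisc_iff {U U' : Type*} [AddCommGroup U] [Module K U] [AddCommGroup U'] [Module K U']
    {g : LinearMap.BilinForm K U} {g' : LinearMap.BilinForm K U'}
    {e : K} (h : HasDisc g e) (h' : HasDisc g' e) (d : K) (hd : HasDisc g d) : HasDisc g' d := by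
  obtain ⟨s, hs, hh⟩ := hasDisc_unique h hd
  exact hasDisc_smul h' d s hs hh

theorem anti_li {U : Type*} [AddCommGroup U] [Module K U] (g : LinearMap.BilinForm K U)
    {d : ℕ} (u : Fin d → U) (h0 : ∀ i j : Fin d, d ≤ (i : ℕ) + j → g (u i) (u j) = 0)
    (h1 : ∀ i : Fin d, g (u i) (u i.rev) ≠ 0) : LinearIndependent K u := by
  apply gram_li g u
  rw [det_anti d (Matrix.of fun i j => g (u i) (u j)) h0, Finset.prod_ne_zero_iff]
  intro i _
  exact mul_ne_zero (pow_ne_zero _ (by simp)) (h1 i)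

theorem anti_disc {U : Type*} [AddCommGroup U] [Module K U] [FiniteDimensional K U]
    (g : LinearMap.BilinForm K U)
    {d : ℕ} (u : Fin d → U) (h0 : ∀ i j : Fin d, d ≤ (i : ℕ) + j → g (u i) (u j) = 0)
    (h1 : ∀ i : Fin d, g (u i) (u i.rev) ≠ 0) (hd : finrank K U = d) :
    HasDisc g (∏ i : Fin d, ((-1) ^ (i : ℕ) * g (u i) (u i.rev))) := by
  subst hd
  have li := anti_li g u h0 h1
  refine ⟨basisOfLinearIndependentOfCardEqFinrank' u li (by simp), 1, ?_⟩
  rw [coe_basisOfLinearIndependentOfCardEqFinrank',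
    det_anti _ (Matrix.of fun i j => g (u i) (u j)) h0]
  simp

theorem anti_hyp {U : Type*} [AddCommGroup U] [Module K U] [FiniteDimensional K U]
    (g : LinearMap.BilinForm K U)
    {d : ℕ} (u : Fin d → U) (h0 : ∀ i j : Fin d, d ≤ (i : ℕ) + j → g (u i) (u j) = 0)
    (h1 : ∀ i : Fin d, g (u i) (u i.rev) ≠ 0) (hd : finrank K U = d) (hev : Even d) :
    IsHyperbolicSpace g := by
  obtain ⟨k, rfl⟩ := hev
  have li := anti_li g u h0 h1
  have li2 : LinearIndependent K (fun i : Fin k => u (Fin.natAdd k i)) :=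
    li.comp _ (Fin.natAdd_injective k k)
  refine ⟨Submodule.span K (Set.range fun i : Fin k => u (Fin.natAdd k i)), ?_, ?_⟩
  · intro x hx y hy
    induction hx using Submodule.span_induction with
    | zero => simp
    | add a b _ _ ha hb => simp [ha, hb]
    | smul c a _ ha => simp [ha]
    | mem a ha =>
      obtain ⟨i, rfl⟩ := ha
      induction hy using Submodule.span_induction with
      | zero => simp
      | add a b _ _ ha hb => rw [map_add, ha, hb, add_zero]
      | smul c a _ ha => rw [map_smul, ha, smul_zero]
      | mem b hb =>
        obtain ⟨j, rfl⟩ := hb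
        apply h0
        simp; omega
  · rw [finrank_span_eq_card li2, hd]; simp; omega

theorem prod_sign_even (k : ℕ) : ∏ i : Fin (2 * k), (-1 : K) ^ (i : ℕ) = (-1) ^ k := by
  rw [Fin.prod_univ_eq_prod_range (fun i => (-1 : K) ^ i)]
  induction k with
  | zero => simp
  | succ k ih =>
    rw [show 2 * (k + 1) = 2 * k + 1 + 1 by ring, Finset.prod_range_succ, Finset.prod_range_succ, ih]
    simp [pow_succ, pow_mul]

theorem prod_sign_odd (k : ℕ) : ∏ i : Fin (2 * k + 1), (-1 : K) ^ (i : ℕ) = (-1) ^ k := by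
  rw [Fin.prod_univ_castSucc]
  simp [prod_sign_even, pow_mul]

end helpers
section core

theorem pair_adj (f : LinearMap.BilinForm K V) (N P : Module.End K V) (hc : Commute P N)
    (hf : ∀ x y, f (N x) y = - f x (P (N y))) (i : ℕ) :
    ∀ x y, f ((N ^ i) x) y = (-1) ^ i * f x ((P ^ i) ((N ^ i) y)) := by
  induction i with
  | zero => simp
  | succ i ih =>
    intro x y
    have h1 : (P ^ i) ((N ^ i) (P (N y))) = (P ^ (i + 1)) ((N ^ (i + 1)) y) := by
      have : P ^ i * (N ^ i * (P * N)) = P ^ (i + 1) * N ^ (i + 1) := by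
        rw [← mul_assoc (N ^ i), ← (hc.pow_right i).eq, pow_succ, pow_succ]
        simp only [mul_assoc]
      exact congrArg (fun g : Module.End K V => g y) this
    rw [pow_succ' N, Module.End.mul_apply, hf, ih, h1, ← pow_succ' N]
    ring

theorem pair_zero (f : LinearMap.BilinForm K V) (N P : Module.End K V) (hc : Commute P N)
    (hf : ∀ x y, f (N x) y = - f x (P (N y))) (m : ℕ) (hN : N ^ (2 * m + 1) = 0) (i j : ℕ)
    (hij : 2 * m + 1 ≤ i + j) (x y : V) : f ((N ^ i) x) ((N ^ j) y) = 0 := by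
  rw [pair_adj f N P hc hf, ← Module.End.mul_apply (N ^ i), ← pow_add,
    pow_eq_zero_of_le hij hN]
  simp

theorem P_fix (N P : Module.End K V) (hP : P * (1 + N) = 1) (m : ℕ)
    (hN : N ^ (2 * m + 1) = 0) (i : ℕ) : P ^ i * N ^ (2 * m) = N ^ (2 * m) := by
  have h1 : P * N ^ (2 * m) = N ^ (2 * m) := by
    have : (1 + N) * N ^ (2 * m) = N ^ (2 * m) := by
      rw [add_mul, ← pow_succ', hN]; simp
    calc P * N ^ (2 * m) = P * ((1 + N) * N ^ (2 * m)) := by rw [this]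
      _ = N ^ (2 * m) := by rw [← mul_assoc, hP, one_mul]
  induction i with
  | zero => simp
  | succ i ih => rw [pow_succ, mul_assoc, h1, ih]

theorem pair_mid (f : LinearMap.BilinForm K V) (N P : Module.End K V) (hc : Commute P N)
    (hP : P * (1 + N) = 1)
    (hf : ∀ x y, f (N x) y = - f x (P (N y))) (m : ℕ) (hN : N ^ (2 * m + 1) = 0) (i j : ℕ)
    (hij : i + j = 2 * m) (x y x' y' : V) :
    f ((N ^ i) (x + N x')) ((N ^ j) (y + N y')) = (-1) ^ i * f x ((N ^ (2 * m)) y) := by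
  have a1 : ∀ z, (N ^ i) (N z) = (N ^ (i + 1)) z := fun z => by rw [pow_succ]; rfl
  have a2 : ∀ z, (N ^ j) (N z) = (N ^ (j + 1)) z := fun z => by rw [pow_succ]; rfl
  simp only [map_add, LinearMap.add_apply, a1, a2]
  rw [pair_zero f N P hc hf m hN (i + 1) j (by omega), pair_zero f N P hc hf m hN i (j + 1) (by omega),
    pair_zero f N P hc hf m hN (i + 1) (j + 1) (by omega), pair_adj f N P hc hf,
    ← Module.End.mul_apply (N ^ i), ← pow_add, hij, ← Module.End.mul_apply, P_fix N P hP m hN]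
  ring

theorem ex_y (N P S : Module.End K V) (hc : Commute P N) (hP : P * (1 + N) = 1)
    (hS : S * N = - (P * N * S)) (v : V) (ε : K) (y₀ : V) (hv : S v = ε • v + N y₀) (k : ℕ) :
    ∃ y, S ((N ^ k) v) = (ε * (-1) ^ k) • (N ^ k) v + (N ^ (k + 1)) y := by
  induction k with
  | zero => exact ⟨y₀, by simpa using hv⟩
  | succ k ih =>
    obtain ⟨y, hy⟩ := ih
    have hP' : P = 1 - P * N := by rw [← hP]; noncomm_ring
    have e1 : ∀ z, S (N z) = - N (P (S z)) := fun z => by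
      have := congrArg (fun g : Module.End K V => g z) hS
      rw [hc.eq] at this
      simpa using this
    have e2 : ∀ z, P z = z - N (P z) := fun z => by
      have := congrArg (fun g : Module.End K V => g z) hP'
      rw [hc.eq] at this
      simpa using this
    have e3 : ∀ z j, P ((N ^ j) z) = (N ^ j) (P z) := fun z j =>
      congrArg (fun g : Module.End K V => g z) (hc.pow_right j).eq
    have e4 : ∀ z j, N ((N ^ j) z) = (N ^ (j + 1)) z := fun z j => by rw [pow_succ']; rfl
    have e5 : ∀ z j, (N ^ j) (N z) = (N ^ (j + 1)) z := fun z j => by rw [pow_succ]; rfl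
    refine ⟨(ε * (-1) ^ k) • P v - P y, ?_⟩
    rw [← e4, e1, hy, map_add, map_smul, e3, e3, map_add, map_smul, e4, e4]
    have ev : (N ^ (k + 1)) (P v) = (N ^ (k + 1)) v - (N ^ (k + 1 + 1)) (P v) := by
      conv_lhs => rw [e2 v]
      rw [map_sub, e5]
    rw [ev]
    simp only [map_sub, map_smul, e4]
    module

theorem ex_w (h2 : (2 : K) ≠ 0) (N P S : Module.End K V) (hc : Commute P N) (hP : P * (1 + N) = 1)
    (hS : S * N = - (P * N * S)) (hSS : S * S = 1) (v : V) (ε : K) (hε : ε * ε = 1)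
    (y₀ : V) (hv : S v = ε • v + N y₀) (k : ℕ) :
    ∃ y, S ((N ^ k) (v + N y)) = (ε * (-1) ^ k) • (N ^ k) (v + N y) := by
  obtain ⟨y, hy⟩ := ex_y N P S hc hP hS v ε y₀ hv k
  have e5 : ∀ z j, (N ^ j) (N z) = (N ^ (j + 1)) z := fun z j => by rw [pow_succ]; rfl
  have hη : (ε * (-1) ^ k) * (ε * (-1) ^ k) = 1 := by
    rw [mul_mul_mul_comm, hε, ← mul_pow]; simp
  generalize ε * (-1) ^ k = η at *
  have hw : (N ^ k) (v + N ((2⁻¹ * η) • y)) = (2⁻¹ : K) • ((N ^ k) v + η • S ((N ^ k) v)) := by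
    rw [hy, map_add, e5, map_smul]
    have : (2⁻¹ : K) * 2 = 1 := inv_mul_cancel₀ h2
    match_scalars
    · linear_combination (-1 : K) * this + (-2⁻¹ : K) * hη
    · ring
  refine ⟨(2⁻¹ * η) • y, ?_⟩
  have hSS' : ∀ z, S (S z) = z := fun z => congrArg (fun g : Module.End K V => g z) hSS
  rw [hw]
  simp only [map_smul, map_add, hSS']
  match_scalars <;> first | ring1 | linear_combination (-2⁻¹ : K) * hη | linear_combination (2⁻¹ : K) * hη

theorem sub_fr [FiniteDimensional K V] (f : LinearMap.BilinForm K V) (W : Submodule K V)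
    {d : ℕ} (u : Fin d → V) (hu : ∀ i, u i ∈ W)
    (h0 : ∀ i j : Fin d, d ≤ (i : ℕ) + j → f (u i) (u j) = 0) (a : K) (ha : a ≠ 0)
    (h1 : ∀ i : Fin d, f (u i) (u i.rev) = a) :
    d ≤ finrank K W ∧ (finrank K W = d →
      HasDisc (f.restrict W) ((∏ i : Fin d, (-1) ^ (i : ℕ)) * a ^ d) ∧
      (Even d → IsHyperbolicSpace (f.restrict W))) := by
  let u' : Fin d → W := fun i => ⟨u i, hu i⟩
  have h0' : ∀ i j : Fin d, d ≤ (i : ℕ) + j → f.restrict W (u' i) (u' j) = 0 := h0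
  have h1'' : ∀ i : Fin d, f.restrict W (u' i) (u' i.rev) = a := h1
  have h1' : ∀ i : Fin d, f.restrict W (u' i) (u' i.rev) ≠ 0 := fun i => by rw [h1'']; exact ha
  refine ⟨?_, fun hd => ⟨?_, fun he => anti_hyp _ u' h0' h1' hd he⟩⟩
  · simpa using (anti_li _ u' h0' h1').fintype_card_le_finrank
  · have := anti_disc _ u' h0' h1' hd
    simp only [h1'', Finset.prod_mul_distrib] at this
    simpa using this

theorem core [FiniteDimensional K V] (h2 : (2 : K) ≠ 0) (f : LinearMap.BilinForm K V)
    (N P S : Module.End K V) (hc : Commute P N)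
    (hP : P * (1 + N) = 1)
    (hf : ∀ x y, f (N x) y = - f x (P (N y))) (m : ℕ) (hN : N ^ (2 * m + 1) = 0)
    (hdim : finrank K V ≤ 2 * m + 1)
    (hS : S * N = - (P * N * S)) (hSS : S * S = 1) (v : V) (p q : ℕ) (hpq : p + q = 1)
    (y₀ : V) (hv : S v = (-(-1 : K) ^ p) • v + N y₀)
    (hne : f v ((N ^ (2 * m)) v) ≠ 0) :
    finrank K (LinearMap.range (S - 1)) = m + q ∧
    HasDisc f (f v ((N ^ (2 * m)) v)) ∧
    HasDisc (f.restrict (LinearMap.range (S - 1)))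
      ((∏ i : Fin (m + q), (-1) ^ (i : ℕ)) * ((-1) ^ p * f v ((N ^ (2 * m)) v)) ^ (m + q)) ∧
    (Even (m + q) → IsHyperbolicSpace (f.restrict (LinearMap.range (S - 1)))) ∧
    (Even (m + p) → IsHyperbolicSpace (f.restrict (LinearMap.ker (S - 1)))) := by
  set c := f v ((N ^ (2 * m)) v) with hcdef
  have hs1 : ∀ n : ℕ, (-1 : K) ^ n * (-1) ^ n = 1 := fun n => by rw [← mul_pow]; simp
  have hε : (-(-1 : K) ^ p) * (-(-1 : K) ^ p) = 1 := by rw [neg_mul_neg, hs1]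
  choose y hy using ex_w h2 N P S hc hP hS hSS v _ hε y₀ hv
  have hz : ∀ i j, 2 * m + 1 ≤ i + j → f ((N ^ i) (v + N (y i))) ((N ^ j) (v + N (y j))) = 0 :=
    fun i j h => pair_zero f N P hc hf m hN i j h _ _
  have hm : ∀ i j, i + j = 2 * m →
      f ((N ^ i) (v + N (y i))) ((N ^ j) (v + N (y j))) = (-1) ^ i * c :=
    fun i j h => pair_mid f N P hc hP hf m hN i j h _ _ _ _
  generalize hw : (fun i => (N ^ i) (v + N (y i))) = w at *
  have hw' : ∀ i, (N ^ i) (v + N (y i)) = w i := fun i => congrFun hw i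
  simp only [hw'] at hy hz hm
  have hsn : ∀ n : ℕ, (-1 : K) ^ n ≠ 0 := fun n => pow_ne_zero _ (by simp)
  -- whole space
  have A0 : ∀ i j : Fin (2 * m + 1), 2 * m + 1 ≤ (i : ℕ) + j → f (w i) (w j) = 0 :=
    fun i j h => hz _ _ h
  have A1 : ∀ i : Fin (2 * m + 1), f (w i) (w i.rev) = (-1) ^ (i : ℕ) * c :=
    fun i => hm _ _ (by rw [Fin.val_rev]; omega)
  have A1' : ∀ i : Fin (2 * m + 1), f (w i) (w i.rev) ≠ 0 :=
    fun i => by rw [A1]; exact mul_ne_zero (hsn _) hne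
  have Ad : finrank K V = 2 * m + 1 := by
    refine le_antisymm hdim ?_
    simpa using (anti_li f (fun i : Fin (2 * m + 1) => w i) A0 A1').fintype_card_le_finrank
  have A2 := anti_disc f (fun i : Fin (2 * m + 1) => w i) A0 A1' Ad
  simp only [A1, ← mul_assoc, hs1] at A2
  have A3 : HasDisc f c := by
    refine hasDisc_smul A2 c (c ^ m) (pow_ne_zero _ hne) ?_
    simp; ring
  -- eigenspaces
  have B : ∀ r s : ℕ, r + s = 1 → ∀ W : Submodule K V, (∀ i, w (2 * i + r) ∈ W) →
      m + s ≤ finrank K W ∧ (finrank K W = m + s →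
      HasDisc (f.restrict W) ((∏ i : Fin (m + s), (-1) ^ (i : ℕ)) * ((-1) ^ r * c) ^ (m + s)) ∧
      (Even (m + s) → IsHyperbolicSpace (f.restrict W))) := by
    intro r s hrs W hW
    refine sub_fr f W (fun i : Fin (m + s) => w (2 * i + r)) (fun i => hW _) ?_ _
      (mul_ne_zero (hsn _) hne) ?_
    · intro i j hij
      apply hz; omega
    · intro i
      rw [hm _ _ (by rw [Fin.val_rev]; omega), pow_add, pow_mul]
      simp
  have C1 := B p q hpq (LinearMap.range (S - 1)) (by
    intro i
    refine ⟨(-2⁻¹ : K) • w (2 * i + p), ?_⟩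
    rw [LinearMap.sub_apply, map_smul, hy, Module.End.one_apply, pow_add, pow_mul]
    have := hs1 p
    have h3 : (2⁻¹ : K) * 2 = 1 := inv_mul_cancel₀ h2
    simp only [even_two, Even.neg_pow, one_pow, one_mul, neg_mul, this]
    match_scalars; linear_combination h3)
  have C2 := B q p (by omega) (LinearMap.ker (S - 1)) (by
    intro i
    rw [LinearMap.mem_ker, LinearMap.sub_apply, hy, Module.End.one_apply, pow_add, pow_mul]
    have : (-1 : K) ^ p * (-1) ^ q = -1 := by rw [← pow_add, hpq, pow_one]
    simp only [even_two, Even.neg_pow, one_pow, one_mul, neg_mul, this]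
    simp)
  have D := LinearMap.finrank_range_add_finrank_ker (S - 1)
  have E1 : finrank K (LinearMap.range (S - 1)) = m + q := by omega
  have E2 : finrank K (LinearMap.ker (S - 1)) = m + p := by omega
  exact ⟨E1, A3, (C1.2 E1).1, (C1.2 E1).2, (C2.2 E2).2⟩

end core

/-- Let `φ ∈ O(V)` be cyclic with minimal polynomial `(x-1)^{2m+1}` and
`φ = στ` with `σ, τ` involutions of `O(V)`. Then (1) `dim Bahn(σ) = dim Bahn(τ) ∈ {m, m+1}`;
(2) either both `Bahn(σ), Bahn(τ)` or both `Fix(σ), Fix(τ)` are hyperbolic; (3)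
`disc Bahn(σ) = disc Bahn(τ) ∈ {(-1)^t, (-1)^t disc V}` with `t = ⌊(m+1)/2⌋`. -/
theorem stmt13 [FiniteDimensional K V] (hK : ringChar K ≠ 2)
    (f : LinearMap.BilinForm K V) (hsymm : f.IsSymm) (hnd : f.Nondegenerate)
    (φ σ τ : V ≃ₗ[K] V) (hφ : φ ∈ orthGroup f) (hσ : σ ∈ orthGroup f) (hτ : τ ∈ orthGroup f)
    (m : ℕ) (hcyc : IsCyclicEnd (φ : V →ₗ[K] V))
    (hmin : minpoly K (φ : V →ₗ[K] V) = (X - 1) ^ (2 * m + 1))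
    (hσ2 : σ ^ 2 = 1) (hτ2 : τ ^ 2 = 1) (hprod : φ = σ * τ) :
    (Module.finrank K (LinearMap.range ((σ : V →ₗ[K] V) - 1)) =
        Module.finrank K (LinearMap.range ((τ : V →ₗ[K] V) - 1)) ∧
      (Module.finrank K (LinearMap.range ((σ : V →ₗ[K] V) - 1)) = m ∨
        Module.finrank K (LinearMap.range ((σ : V →ₗ[K] V) - 1)) = m + 1)) ∧
    ((IsHyperbolicSpace (f.restrict (LinearMap.range ((σ : V →ₗ[K] V) - 1))) ∧
        IsHyperbolicSpace (f.restrict (LinearMap.range ((τ : V →ₗ[K] V) - 1)))) ∨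
      (IsHyperbolicSpace (f.restrict (LinearMap.ker ((σ : V →ₗ[K] V) - 1))) ∧
        IsHyperbolicSpace (f.restrict (LinearMap.ker ((τ : V →ₗ[K] V) - 1))))) ∧
    ((∀ d : K, HasDisc (f.restrict (LinearMap.range ((σ : V →ₗ[K] V) - 1))) d ↔
        HasDisc (f.restrict (LinearMap.range ((τ : V →ₗ[K] V) - 1))) d) ∧
      (HasDisc (f.restrict (LinearMap.range ((σ : V →ₗ[K] V) - 1)))
          ((-1 : K) ^ ((m + 1) / 2)) ∨
        ∃ e : K, HasDisc f e ∧
          HasDisc (f.restrict (LinearMap.range ((σ : V →ₗ[K] V) - 1)))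
            ((-1 : K) ^ ((m + 1) / 2) * e))) := by
  have h2 : (2 : K) ≠ 0 := Ring.two_ne_zero hK
  obtain ⟨v, hv⟩ := hcyc
  set F : Module.End K V := (φ : V →ₗ[K] V) with hF
  set N : Module.End K V := F - 1 with hNdef
  set P : Module.End K V := (φ.symm : V →ₗ[K] V) with hPdef
  have hF1 : F = 1 + N := by rw [hNdef]; abel
  have hPF : P * F = 1 := by ext x; simp [hPdef, hF]
  have hFP : F * P = 1 := by ext x; simp [hPdef, hF]
  have hcF : Commute P F := hPF.trans hFP.symm
  have hc : Commute P N := by rw [hNdef]; exact hcF.sub_right (Commute.one_right P)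
  have hP : P * (1 + N) = 1 := by rw [← hF1]; exact hPF
  have haev : ∀ k, aeval F ((X - 1 : K[X]) ^ k) = N ^ k := by intro k; simp [hNdef]
  have hN : N ^ (2 * m + 1) = 0 := by rw [← haev, ← hmin]; exact minpoly.aeval K F
  have hN' : N ^ (2 * m) ≠ 0 := by
    intro h
    rw [← haev] at h
    have hX : (X - 1 : K[X]).Monic := by simpa using monic_X_sub_C (1 : K)
    have hXd : (X - 1 : K[X]).degree = 1 := by simpa using degree_X_sub_C (1 : K)
    have h3 := minpoly.min K F (hX.pow (2 * m)) h
    rw [hmin, degree_pow, degree_pow, hXd] at h3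
    simp only [nsmul_eq_mul, mul_one] at h3
    have h4 : 2 * m + 1 ≤ 2 * m := by exact_mod_cast h3
    omega
  have hf : ∀ x y, f (N x) y = - f x (P (N y)) := by
    intro x y
    have e1 : f (F x) y = f x (P y) := by
      have := hφ x (φ.symm y)
      rw [LinearEquiv.apply_symm_apply] at this
      exact this
    have e2 : P (F y) = y := by simp [hPdef, hF]
    simp only [hNdef, LinearMap.sub_apply, map_sub, Module.End.one_apply, e1, e2]
    ring
  -- invariant submodules containing `v`
  have hinv : ∀ W : Submodule K V, v ∈ W → (∀ x ∈ W, N x ∈ W) → W = ⊤ := by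
    intro W hvW hNW
    rw [eq_top_iff, ← hv, cycSub, Submodule.span_le]
    rintro _ ⟨n, rfl⟩
    show (F ^ n) v ∈ W
    induction n with
    | zero => simpa using hvW
    | succ n ih =>
      rw [pow_succ', Module.End.mul_apply]
      have : F ((F ^ n) v) = (F ^ n) v + N ((F ^ n) v) := by simp [hNdef]
      rw [this]
      exact W.add_mem ih (hNW _ ih)
  have hdim : finrank K V ≤ 2 * m + 1 := by
    have ht := hinv (Submodule.span K (Set.range fun i : Fin (2 * m + 1) => (N ^ (i : ℕ)) v))
      (Submodule.subset_span ⟨0, by simp⟩) (by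
        intro x hx
        induction hx using Submodule.span_induction with
        | zero => simp
        | add a b _ _ ha hb => rw [map_add]; exact Submodule.add_mem _ ha hb
        | smul c a _ ha => rw [map_smul]; exact Submodule.smul_mem _ _ ha
        | mem a ha =>
          obtain ⟨i, rfl⟩ := ha
          show N ((N ^ (i : ℕ)) v) ∈ _
          rw [← Module.End.mul_apply, ← pow_succ']
          by_cases hi : (i : ℕ) + 1 < 2 * m + 1
          · exact Submodule.subset_span ⟨⟨i + 1, hi⟩, rfl⟩
          · rw [pow_eq_zero_of_le (by omega) hN]; simp)
    have h4 := finrank_range_le_card (R := K) (fun i : Fin (2 * m + 1) => (N ^ (i : ℕ)) v)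
    rw [Set.finrank, ht, finrank_top] at h4
    simpa using h4
  have hspan : ∀ x, ∃ (a : K) (y : V), x = a • v + N y := by
    have ht := hinv (Submodule.span K {v} ⊔ LinearMap.range N)
      (Submodule.mem_sup_left (Submodule.mem_span_singleton_self v))
      (fun x _ => Submodule.mem_sup_right ⟨x, rfl⟩)
    intro x
    have hx : x ∈ Submodule.span K {v} ⊔ LinearMap.range N := by rw [ht]; trivial
    obtain ⟨a, ha, b, ⟨y, rfl⟩, rfl⟩ := Submodule.mem_sup.1 hx
    obtain ⟨r, rfl⟩ := Submodule.mem_span_singleton.1 ha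
    exact ⟨r, y, rfl⟩
  have hNN : ∀ z, (N ^ (2 * m)) (N z) = 0 := by
    intro z
    rw [← Module.End.mul_apply, ← pow_succ, hN]; rfl
  have hNv : (N ^ (2 * m)) v ≠ 0 := by
    intro h
    apply hN'
    ext x
    obtain ⟨a, y, rfl⟩ := hspan x
    simp [h, hNN]
  have hvN : ∀ (a : K) (y : V), a • v = N y → a = 0 := by
    intro a y h
    have := congrArg (N ^ (2 * m)) h
    rw [map_smul, hNN] at this
    exact (smul_eq_zero.1 this).resolve_right hNv
  have hne : f v ((N ^ (2 * m)) v) ≠ 0 := by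
    intro h
    apply hNv
    apply hnd.2
    intro x
    obtain ⟨a, y, rfl⟩ := hspan x
    have := pair_zero f N P hc hf m hN 1 (2 * m) (by omega) y v
    rw [pow_one] at this
    simp [h, this]
  set S : Module.End K V := (σ : V →ₗ[K] V) with hSdef
  set T : Module.End K V := (τ : V →ₗ[K] V) with hTdef
  have hSS : S * S = 1 := by
    ext x; exact congrArg (fun g : V ≃ₗ[K] V => g x) (by rw [← pow_two, hσ2] : σ * σ = 1)
  have hTT : T * T = 1 := by
    ext x; exact congrArg (fun g : V ≃ₗ[K] V => g x) (by rw [← pow_two, hτ2] : τ * τ = 1)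
  have hFST : F = S * T := by
    ext x; exact congrArg (fun g : V ≃ₗ[K] V => g x) hprod
  have hPTS : P = T * S := by
    calc P = P * (F * (T * S)) := by
          rw [hFST, mul_assoc S, ← mul_assoc T, hTT, one_mul, hSS, mul_one]
      _ = T * S := by rw [← mul_assoc, hPF, one_mul]
  have hPN : P * N = 1 - P := by rw [hNdef, mul_sub, hPF, mul_one]
  have hS : S * N = - (P * N * S) := by
    rw [hPN, hNdef, hPTS, hFST, mul_sub, ← mul_assoc, hSS, sub_mul, mul_assoc T, hSS]
    simp
  have hT : T * N = - (P * N * T) := by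
    rw [hPN, hNdef, hPTS, hFST, mul_sub, sub_mul, mul_assoc T S T]
    simp
  obtain ⟨ε, y, hy⟩ := hspan (S v)
  have hSN : ∀ z, S (N z) = - N (P (S z)) := fun z => by
    have := congrArg (fun g : Module.End K V => g z) hS
    rw [hc.eq] at this
    simpa using this
  have hε : ε * ε = 1 := by
    have h5 : S (S v) = v := congrArg (fun g : Module.End K V => g v) hSS
    rw [hy, map_add, map_smul, hy, hSN] at h5
    have h6 := hvN (ε * ε - 1) (N.toFun 0 - ε • y + P (S y)) (by
      have : (ε * ε - 1) • v = ε • (ε • v + N y) + -N (P (S y)) - v - ε • N y + N (P (S y)) := by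
        module
      rw [this, h5]
      simp)
    exact sub_eq_zero.1 h6
  have hTv : T v = ε • v + N (y - P (S v)) := by
    have h7 : T = S * F := by rw [hFST, ← mul_assoc, hSS, one_mul]
    rw [h7, Module.End.mul_apply, hF1, LinearMap.add_apply, Module.End.one_apply, map_add, hSN,
      map_sub, ← sub_eq_add_neg, ← add_sub_assoc, ← hy]
  have hex : ∃ p q : ℕ, p + q = 1 ∧ ε = -(-1 : K) ^ p := by
    rcases mul_self_eq_one_iff.1 hε with h | h
    · exact ⟨1, 0, rfl, by simp [h]⟩
    · exact ⟨0, 1, rfl, by simp [h]⟩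
  obtain ⟨p, q, hpq, rfl⟩ := hex
  obtain ⟨s1, s2, s3, s4, s5⟩ := core h2 f N P S hc hP hf m hN hdim hS hSS v p q hpq _ hy hne
  obtain ⟨t1, -, t3, t4, t5⟩ := core h2 f N P T hc hP hf m hN hdim hT hTT v p q hpq _ hTv hne
  refine ⟨⟨s1.trans t1.symm, by omega⟩, ?_, ?_, ?_⟩
  · rcases Nat.even_or_odd (m + q) with h | h
    · exact Or.inl ⟨s4 h, t4 h⟩
    · have h' : Even (m + p) := by rw [Nat.even_iff]; rw [Nat.odd_iff] at h; omega
      exact Or.inr ⟨s5 h', t5 h'⟩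
  · exact fun d => ⟨fun h => hasDisc_iff s3 t3 d h, fun h => hasDisc_iff t3 s3 d h⟩
  · generalize f v ((N ^ (2 * m)) v) = c at *
    rcases Nat.even_or_odd' (m + q) with ⟨k, h | h⟩
    · left
      have hk : (m + 1) / 2 = k := by omega
      rw [hk]
      rw [h, prod_sign_even] at s3
      refine hasDisc_smul s3 _ (((-1) ^ p * c) ^ k)
        (pow_ne_zero _ (mul_ne_zero (pow_ne_zero _ (by simp)) hne)) ?_
      rw [pow_mul']
    · right
      refine ⟨c, s2, ?_⟩
      rw [h, prod_sign_odd] at s3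
      refine hasDisc_smul s3 _ (((-1) ^ p * c) ^ k)
        (pow_ne_zero _ (mul_ne_zero (pow_ne_zero _ (by simp)) hne)) ?_
      have hk : (m + 1) / 2 = k + p := by omega
      rw [hk]
      ring

end Biref
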